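/- In any 7-schedule of the constructed 2-RAR instance, for each j∈[n] and t∈[4], one of the two jobs VJob(j,t,⊤) and VJob(j,t,⊥) is assigned to CMach(κ(j,t)) and the other is assigned to TMach(j,⌊t/2⌋). -/

import Mathlib

/-!
In a 7-schedule every `CJob` must run on a `CMach`, and no `CMach` can hold two of them because
their sizes are at least `4`. There are as many `CJob`s as `CMach`s, so by injectivity each `CMach`
holds exactly one, of size `4` or `5`, and no `TJob`; hence its variable jobs have total size `2`
or `3` (`vLoad_clause`). The two resources together pin `TJob(j,0)` to `TMach(j,0)`, `TJob(j,1)` to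
`TMach(j,1)` and `TJob(j,2)` to one of these two, so the variable jobs on a `TMach` have total size
`4` or `6` (`vLoad_truth`).

The theorem follows by strong induction on `2j + q` (`placed_of_lt`), where the *class* of
`VJob(j,t,∘)` is `2j + ⌊t/2⌋`. Eligibility allows on `TMach(j,q)` and on `CMach(κ(j,t))` with
`⌊t/2⌋ = q` only variable jobs of class at most `2j + q`, and by induction those of smaller class
all sit on other machines. So only the four jobs `VJob(j,2q,∘)`, `VJob(j,2q+1,∘)`, of sizes
`3, 2, 3, 2`, can occur on the three machines `CMach(κ(j,2q))`, `CMach(κ(j,2q+1))`, `TMach(j,q)`,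
and the first of these accepts only `VJob(j,2q,∘)`. Both `CMach`s take one job each. The two
remaining jobs must both be on `TMach(j,q)` and have equal sizes, which rules out that both
`VJob(j,2q,∘)` are on `CMach`s.
-/

open Finset

/-- A 3-SAT* instance: `n` variables, `2m` clauses of 3 literals each
(the first `m` are 1-in-3-clauses, the last `m` are 2-in-3-clauses).
`lit i s` is the literal at position `s` of clause `i`, given as a pair
(variable, polarity). The occurrence bijection `occ` maps the pair `(j,t)`
(the `t`-th occurrence of variable `x_j`, positive for `t = 0,1`, negative for
`t = 2,3`) to the corresponding (clause, position) pair; `occ_spec` says the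
literal there is indeed `x_j` with the right polarity. Bijectivity of `occ`
encodes that every literal occurs exactly twice (and forces `6m = 4n`). -/
structure SAT3Star where
  n : ℕ
  m : ℕ
  lit : Fin (2 * m) → Fin 3 → Fin n × Bool
  occ : (Fin n × Fin 4) ≃ (Fin (2 * m) × Fin 3)
  occ_spec : ∀ jt : Fin n × Fin 4,
    lit (occ jt).1 (occ jt).2 = (jt.1, decide ((jt.2 : ℕ) < 2))

/-- `α` satisfies the 3-SAT* instance: every `k`-in-3-clause has exactly `k`
true literals. -/
def SAT3Star.Satisfies (S : SAT3Star) (α : Fin S.n → Bool) : Prop :=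
  ∀ i : Fin (2 * S.m),
    (Finset.univ.filter (fun s : Fin 3 => α (S.lit i s).1 = (S.lit i s).2)).card =
      if (i : ℕ) < S.m then 1 else 2

/-- `⌊t/2⌋` as an element of `Fin 2`. -/
def half (t : Fin 4) : Fin 2 := ⟨(t : ℕ) / 2, by have := t.isLt; omega⟩

/-- Machines of the 2-RAR instance: `TMach(j,q)` (left) and `CMach(i,s)` (right). -/
abbrev QMach (S : SAT3Star) := (Fin S.n × Fin 2) ⊕ (Fin (2 * S.m) × Fin 3)

/-- Jobs: `TJob(j,ℓ)` (left), `CJob(i,s)` (middle), `VJob(j,t,∘)` (right). -/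
abbrev QJob (S : SAT3Star) := (Fin S.n × Fin 3) ⊕ (Fin (2 * S.m) × Fin 3) ⊕ (Fin S.n × Fin 4 × Bool)

/-- Job sizes: `TJob(j,ℓ)` has size 1 for `ℓ∈[2]` and 2 for `ℓ=2`; `CJob(i,s)` has size
`4 + φ(i,s)`; `VJob(j,t,⊤)` has size 3 and `VJob(j,t,⊥)` has size 2. -/
def qSize (S : SAT3Star) : QJob S → ℕ
  | .inl (_, l) => if (l : ℕ) = 2 then 2 else 1
  | .inr (.inl (i, s)) =>
      4 + (if (s : ℕ) = 0 then 0
           else if (s : ℕ) = 2 then 1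
           else if (i : ℕ) < S.m then 0 else 1)
  | .inr (.inr (_, _, b)) => if b then 3 else 2

/-- Resource capacities of the machines (two resources). -/
def qCap (S : SAT3Star) : QMach S → ℕ × ℕ
  | .inl (j, q) => (2 * (j : ℕ) + (q : ℕ), 6 * S.n - (2 * (j : ℕ) + (q : ℕ)))
  | .inr c => (2 * S.n + (c.1 : ℕ), 4 * ((S.occ.symm c).1 : ℕ) + ((S.occ.symm c).2 : ℕ))

/-- Resource demands of the jobs (two resources). -/
def qDem (S : SAT3Star) : QJob S → ℕ × ℕ
  | .inl (j, l) =>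
      if (l : ℕ) = 0 then (2 * (j : ℕ), 6 * S.n - 2 * (j : ℕ))
      else if (l : ℕ) = 1 then (2 * (j : ℕ) + 1, 6 * S.n - (2 * (j : ℕ) + 1))
      else (2 * (j : ℕ), 6 * S.n - (2 * (j : ℕ) + 1))
  | .inr (.inl (i, _)) => (2 * S.n + (i : ℕ), 0)
  | .inr (.inr (j, t, _)) => (2 * (j : ℕ) + (t : ℕ) / 2, 4 * (j : ℕ) + (t : ℕ))

/-- Eligibility: both resource demands are met by the capacities. -/
def qElig (S : SAT3Star) (job : QJob S) (M : QMach S) : Prop :=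
  (qDem S job).1 ≤ (qCap S M).1 ∧ (qDem S job).2 ≤ (qCap S M).2

/-- Load of a machine under a schedule. -/
def qLoad (S : SAT3Star) (σ : QJob S → QMach S) (M : QMach S) : ℕ :=
  ∑ j ∈ Finset.univ.filter (fun j => σ j = M), qSize S j

/-- A 7-schedule: every job on an eligible machine, every machine with load exactly 7. -/
def SevenSchedule (S : SAT3Star) (σ : QJob S → QMach S) : Prop :=
  (∀ j, qElig S j (σ j)) ∧ ∀ M, qLoad S σ M = 7

/-! ### Load per machine by type of job -/

/-- Total size of the variable jobs on machine `M`. -/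
def vLoad (S : SAT3Star) (σ : QJob S → QMach S) (M : QMach S) : ℕ :=
  ∑ j : Fin S.n, ∑ t : Fin 4, ∑ b : Bool,
    if σ (.inr (.inr (j, t, b))) = M then (if b then 3 else 2) else 0

/-- Total size of the clause jobs on machine `M`. -/
def cLoad (S : SAT3Star) (σ : QJob S → QMach S) (M : QMach S) : ℕ :=
  ∑ c : Fin (2 * S.m) × Fin 3, if σ (.inr (.inl c)) = M then qSize S (.inr (.inl c)) else 0

/-- Total size of the truth assignment jobs on machine `M`. -/
def tLoad (S : SAT3Star) (σ : QJob S → QMach S) (M : QMach S) : ℕ :=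
  ∑ j : Fin S.n, ∑ l : Fin 3, if σ (.inl (j, l)) = M then (if (l : ℕ) = 2 then 2 else 1) else 0

lemma qLoad_eq (S : SAT3Star) (σ : QJob S → QMach S) (M : QMach S) :
    qLoad S σ M = tLoad S σ M + (cLoad S σ M + vLoad S σ M) := by
  simp only [qLoad, Finset.sum_filter, Fintype.sum_sum_type, tLoad, cLoad, vLoad]
  congr 1
  · rw [Fintype.sum_prod_type]; rfl
  · congr 1
    simp only [Fintype.sum_prod_type]; rfl

lemma cJob_size (S : SAT3Star) (c : Fin (2 * S.m) × Fin 3) :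
    qSize S (.inr (.inl c)) = 4 ∨ qSize S (.inr (.inl c)) = 5 := by
  obtain ⟨i, s⟩ := c
  simp only [qSize]
  split_ifs <;> simp

lemma cJob_machine (S : SAT3Star) (σ : QJob S → QMach S) (h : SevenSchedule S σ)
    (c : Fin (2 * S.m) × Fin 3) : ∃ c', σ (.inr (.inl c)) = .inr c' := by
  have he := h.1 (.inr (.inl c))
  rcases hM : σ (.inr (.inl c)) with ⟨j, q⟩ | c'
  · rw [hM] at he
    have := he.1
    simp only [qDem, qCap] at this
    omega
  · exact ⟨c', rfl⟩

/-- `TJob(j,0)` runs on `TMach(j,0)`, `TJob(j,1)` on `TMach(j,1)` and `TJob(j,2)` on either: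
the two capacities of a `TMach` sum to `6n`, which pins it, and a `CMach` offers less than `4n` of
the second resource. -/
lemma tJob_machine (S : SAT3Star) (σ : QJob S → QMach S) (h : SevenSchedule S σ)
    (j : Fin S.n) (l : Fin 3) :
    ∃ q : Fin 2, σ (.inl (j, l)) = .inl (j, q) ∧ ((l : ℕ) ≠ 2 → (q : ℕ) = l) := by
  have he := h.1 (.inl (j, l))
  rcases hM : σ (.inl (j, l)) with ⟨j', q⟩ | c'
  · rw [hM] at he
    obtain ⟨h1, h2⟩ := he
    simp only [qDem, qCap] at h1 h2
    have hj : (j : ℕ) = j' ∧ ((l : ℕ) ≠ 2 → (q : ℕ) = l) := by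
      split_ifs at h1 h2 <;> dsimp only at h1 h2 <;> omega
    exact ⟨q, by rw [Fin.ext hj.1], hj.2⟩
  · rw [hM] at he
    have h2 := he.2
    simp only [qDem, qCap] at h2
    split_ifs at h2 <;> dsimp only at h2 <;> omega

/-- The clause jobs induce an injective, hence surjective, map to the clause machines, so every
clause machine holds exactly one of them. -/
lemma cLoad_clause (S : SAT3Star) (σ : QJob S → QMach S) (h : SevenSchedule S σ)
    (c : Fin (2 * S.m) × Fin 3) : cLoad S σ (.inr c) = 4 ∨ cLoad S σ (.inr c) = 5 := by
  choose f hf using cJob_machine S σ h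
  have hinj : Function.Injective f := by
    intro a b hab
    by_contra hne
    have h7 := h.2 (.inr (f a))
    rw [qLoad_eq] at h7
    have hle : ∑ x ∈ ({a, b} : Finset _),
        (if σ (.inr (.inl x)) = .inr (f a) then qSize S (.inr (.inl x)) else 0)
        ≤ cLoad S σ (.inr (f a)) :=
      Finset.sum_le_sum_of_subset (Finset.subset_univ _)
    rw [Finset.sum_pair hne, if_pos (hf a), if_pos (by rw [hf b, hab])] at hle
    have := cJob_size S a
    have := cJob_size S b
    omega
  obtain ⟨a, rfl⟩ := Finite.surjective_of_injective hinj c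
  have : cLoad S σ (.inr (f a)) = qSize S (.inr (.inl a)) := by
    unfold cLoad
    rw [Fintype.sum_eq_single a, if_pos (hf a)]
    intro x hx
    rw [if_neg]
    rw [hf x]
    intro hfx
    exact hx (hinj (Sum.inr.inj hfx))
  rw [this]
  exact cJob_size S a

lemma vLoad_clause (S : SAT3Star) (σ : QJob S → QMach S) (h : SevenSchedule S σ)
    (c : Fin (2 * S.m) × Fin 3) : vLoad S σ (.inr c) = 2 ∨ vLoad S σ (.inr c) = 3 := by
  have h7 := h.2 (.inr c)
  rw [qLoad_eq] at h7
  have ht : tLoad S σ (.inr c) = 0 := by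
    refine Finset.sum_eq_zero fun j _ => Finset.sum_eq_zero fun l _ => if_neg ?_
    obtain ⟨q, hq, -⟩ := tJob_machine S σ h j l
    rw [hq]
    exact Sum.inl_ne_inr
  have := cLoad_clause S σ h c
  omega

lemma vLoad_truth (S : SAT3Star) (σ : QJob S → QMach S) (h : SevenSchedule S σ)
    (j : Fin S.n) (q : Fin 2) :
    vLoad S σ (.inl (j, q)) = 4 ∨ vLoad S σ (.inl (j, q)) = 6 := by
  have h7 := h.2 (.inl (j, q))
  rw [qLoad_eq] at h7
  have hc : cLoad S σ (.inl (j, q)) = 0 := by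
    refine Finset.sum_eq_zero fun c _ => if_neg ?_
    obtain ⟨c', hc'⟩ := cJob_machine S σ h c
    rw [hc']
    exact Sum.inr_ne_inl
  have ht : tLoad S σ (.inl (j, q)) = 1 ∨ tLoad S σ (.inl (j, q)) = 3 := by
    unfold tLoad
    rw [Fintype.sum_eq_single j]
    · obtain ⟨q0, h0, e0⟩ := tJob_machine S σ h j 0
      obtain ⟨q1, h1, e1⟩ := tJob_machine S σ h j 1
      obtain ⟨q2, h2, -⟩ := tJob_machine S σ h j 2
      have e0 : q0 = 0 := Fin.ext (e0 (by decide))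
      have e1 : q1 = 1 := Fin.ext (e1 (by decide))
      subst e0 e1
      rw [Fin.sum_univ_three, h0, h1, h2]
      fin_cases q <;> fin_cases q2 <;> simp
    · intro j' hj'
      refine Finset.sum_eq_zero fun l _ => if_neg ?_
      obtain ⟨q', hq', -⟩ := tJob_machine S σ h j' l
      rw [hq']
      intro he
      exact hj' (Prod.ext_iff.1 (Sum.inl.inj he)).1
  omega

/-! ### Placing the variable jobs by induction on their class -/

/-- The conclusion of the theorem for the pair `(j,t)`. -/
def Placed (S : SAT3Star) (σ : QJob S → QMach S) (j : Fin S.n) (t : Fin 4) : Prop :=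
  (σ (.inr (.inr (j, t, true))) = .inr (S.occ (j, t)) ∧
      σ (.inr (.inr (j, t, false))) = .inl (j, half t)) ∨
    (σ (.inr (.inr (j, t, false))) = .inr (S.occ (j, t)) ∧
      σ (.inr (.inr (j, t, true))) = .inl (j, half t))

lemma Placed.machine {S : SAT3Star} {σ : QJob S → QMach S} {j : Fin S.n} {t : Fin 4}
    (hp : Placed S σ j t) (b : Bool) :
    σ (.inr (.inr (j, t, b))) = .inr (S.occ (j, t)) ∨
      σ (.inr (.inr (j, t, b))) = .inl (j, half t) := by
  rcases hp with ⟨h1, h2⟩ | ⟨h1, h2⟩ <;> cases b <;> simp [h1, h2]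

/-- Once all variable jobs of smaller class are placed, `TMach(j,q)` can only hold variable jobs
of its own class. -/
lemma truth_source {S : SAT3Star} {σ : QJob S → QMach S} (h : SevenSchedule S σ)
    {j : Fin S.n} {q : Fin 2}
    (ih : ∀ (j' : Fin S.n) (t' : Fin 4),
      2 * (j' : ℕ) + (t' : ℕ) / 2 < 2 * (j : ℕ) + q → Placed S σ j' t')
    {j' : Fin S.n} {t' : Fin 4} {b : Bool}
    (hs : σ (.inr (.inr (j', t', b))) = .inl (j, q)) : j' = j ∧ (t' : ℕ) / 2 = q := by
  have he := (h.1 (.inr (.inr (j', t', b)))).1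
  rw [hs] at he
  simp only [qDem, qCap] at he
  rcases he.lt_or_eq with hlt | heq
  · rcases (ih j' t' hlt).machine b with h1 | h1
    · rw [hs] at h1; cases h1
    · rw [hs] at h1
      obtain ⟨e1, e2⟩ := Prod.ext_iff.1 (Sum.inl.inj h1)
      dsimp only at e1 e2
      exact ⟨e1.symm, by rw [e2]; rfl⟩
  · exact ⟨Fin.ext (by omega), by omega⟩

/-- Once all variable jobs of smaller class are placed, `CMach(κ(j,t))` can only hold variable jobs
of the class of `(j,t)`, and among these only those of index at most `t`. -/
lemma clause_source {S : SAT3Star} {σ : QJob S → QMach S} (h : SevenSchedule S σ)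
    {j : Fin S.n} {t : Fin 4}
    (ih : ∀ (j' : Fin S.n) (t' : Fin 4),
      2 * (j' : ℕ) + (t' : ℕ) / 2 < 2 * (j : ℕ) + (t : ℕ) / 2 → Placed S σ j' t')
    {j' : Fin S.n} {t' : Fin 4} {b : Bool}
    (hs : σ (.inr (.inr (j', t', b))) = .inr (S.occ (j, t))) :
    j' = j ∧ (t' : ℕ) / 2 = (t : ℕ) / 2 ∧ (t' : ℕ) ≤ t := by
  have he := (h.1 (.inr (.inr (j', t', b)))).2
  rw [hs] at he
  simp only [qDem, qCap, Equiv.symm_apply_apply] at he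
  by_cases hlt : 2 * (j' : ℕ) + (t' : ℕ) / 2 < 2 * (j : ℕ) + (t : ℕ) / 2
  · rcases (ih j' t' hlt).machine b with h1 | h1
    · rw [hs] at h1
      obtain ⟨e1, e2⟩ := Prod.ext_iff.1 (S.occ.injective (Sum.inr.inj h1))
      dsimp only at e1 e2
      subst e1 e2
      exact ⟨rfl, rfl, le_rfl⟩
    · rw [hs] at h1; cases h1
  · exact ⟨Fin.ext (by omega), by omega, by omega⟩

/-- If all variable jobs on `M` belong to `t₀ ≠ t₁` of the variable `j`, the load is a sum of
four terms. -/
lemma vLoad_eq_four {S : SAT3Star} {σ : QJob S → QMach S} {M : QMach S} {j : Fin S.n}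
    {t₀ t₁ : Fin 4} (hne : t₀ ≠ t₁)
    (hM : ∀ j' t' b, σ (.inr (.inr (j', t', b))) = M → j' = j ∧ (t' = t₀ ∨ t' = t₁)) :
    vLoad S σ M =
      ((if σ (.inr (.inr (j, t₀, true))) = M then 3 else 0) +
        (if σ (.inr (.inr (j, t₀, false))) = M then 2 else 0)) +
      ((if σ (.inr (.inr (j, t₁, true))) = M then 3 else 0) +
        (if σ (.inr (.inr (j, t₁, false))) = M then 2 else 0)) := by
  unfold vLoad
  rw [Fintype.sum_eq_single j, Fintype.sum_eq_add t₀ t₁ hne]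
  · simp
  · intro t' ht'
    refine Finset.sum_eq_zero fun b _ => if_neg fun hs => ?_
    rcases (hM _ _ _ hs).2 with e | e
    · exact ht'.1 e
    · exact ht'.2 e
  · intro j' hj'
    exact Finset.sum_eq_zero fun t' _ => Finset.sum_eq_zero fun b _ =>
      if_neg fun hs => hj' (hM _ _ _ hs).1

/-- Induction step: the two pairs of variable jobs of class `2j + q` are placed once all those of
smaller class are. -/
lemma placed_step {S : SAT3Star} {σ : QJob S → QMach S} (h : SevenSchedule S σ)
    (j : Fin S.n) (q : Fin 2) (t₀ t₁ : Fin 4) (h₀ : (t₀ : ℕ) = 2 * q) (h₁ : (t₁ : ℕ) = 2 * q + 1)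
    (ih : ∀ (j' : Fin S.n) (t' : Fin 4),
      2 * (j' : ℕ) + (t' : ℕ) / 2 < 2 * (j : ℕ) + q → Placed S σ j' t') :
    Placed S σ j t₀ ∧ Placed S σ j t₁ := by
  have hne : t₀ ≠ t₁ := fun e => by rw [e] at h₀; omega
  have hq₀ : half t₀ = q := Fin.ext (by simp only [half]; omega)
  have hq₁ : half t₁ = q := Fin.ext (by simp only [half]; omega)
  have ih₀ : ∀ (j' : Fin S.n) (t' : Fin 4),
      2 * (j' : ℕ) + (t' : ℕ) / 2 < 2 * (j : ℕ) + (t₀ : ℕ) / 2 → Placed S σ j' t' :=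
    fun j' t' hlt => ih j' t' (by omega)
  have ih₁ : ∀ (j' : Fin S.n) (t' : Fin 4),
      2 * (j' : ℕ) + (t' : ℕ) / 2 < 2 * (j : ℕ) + (t₁ : ℕ) / 2 → Placed S σ j' t' :=
    fun j' t' hlt => ih j' t' (by omega)
  have vT := vLoad_truth S σ h j q
  have v₀ := vLoad_clause S σ h (S.occ (j, t₀))
  have v₁ := vLoad_clause S σ h (S.occ (j, t₁))
  rw [vLoad_eq_four (j := j) hne] at vT v₀ v₁
  rotate_left
  · intro j' t' b hs
    obtain ⟨e, e1, e2⟩ := clause_source h ih₁ hs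
    exact ⟨e, by simp only [Fin.ext_iff]; omega⟩
  · intro j' t' b hs
    obtain ⟨e, e1, e2⟩ := clause_source h ih₀ hs
    exact ⟨e, by simp only [Fin.ext_iff]; omega⟩
  · intro j' t' b hs
    obtain ⟨e, e1⟩ := truth_source h ih hs
    exact ⟨e, by simp only [Fin.ext_iff]; omega⟩
  have hB : ∀ b, σ (.inr (.inr (j, t₁, b))) ≠ .inr (S.occ (j, t₀)) := fun b hs => by
    have := (clause_source h ih₀ hs).2.2
    omega
  rw [if_neg (hB true), if_neg (hB false)] at v₀
  have n01 : (.inr (S.occ (j, t₀)) : QMach S) ≠ .inr (S.occ (j, t₁)) := fun e =>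
    hne (Prod.ext_iff.1 (S.occ.injective (Sum.inr.inj e))).2
  have n0T : (.inr (S.occ (j, t₀)) : QMach S) ≠ .inl (j, q) := Sum.inr_ne_inl
  have n1T : (.inr (S.occ (j, t₁)) : QMach S) ≠ .inl (j, q) := Sum.inr_ne_inl
  -- What remains is a finite case analysis on where the four jobs `A`, `A'`, `B`, `B'` of sizes
  -- `3, 2, 3, 2` are placed among the distinct machines `c₀`, `c₁`, `T`.
  unfold Placed
  rw [hq₀, hq₁]
  generalize (.inr (S.occ (j, t₀)) : QMach S) = c₀ at *
  generalize (.inr (S.occ (j, t₁)) : QMach S) = c₁ at *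
  generalize (.inl (j, q) : QMach S) = T at *
  generalize σ (.inr (.inr (j, t₀, true))) = A at *
  generalize σ (.inr (.inr (j, t₀, false))) = A' at *
  generalize σ (.inr (.inr (j, t₁, true))) = B at *
  generalize σ (.inr (.inr (j, t₁, false))) = B' at *
  clear ih ih₀ ih₁ hB h
  grind

lemma placed_of_lt {S : SAT3Star} {σ : QJob S → QMach S} (h : SevenSchedule S σ) (k : ℕ) :
    ∀ (j : Fin S.n) (t : Fin 4), 2 * (j : ℕ) + (t : ℕ) / 2 < k → Placed S σ j t := by
  induction k with
  | zero => intro j t hlt; omega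
  | succ k ih =>
    intro j t hlt
    have hstep := placed_step h j (half t) ⟨2 * ((t : ℕ) / 2), by omega⟩
      ⟨2 * ((t : ℕ) / 2) + 1, by omega⟩ rfl rfl
      (fun j' t' hlt' => ih j' t' (by simp only [half] at hlt'; omega))
    rcases Nat.mod_two_eq_zero_or_one (t : ℕ) with ht | ht
    · have : t = ⟨2 * ((t : ℕ) / 2), by omega⟩ := Fin.ext (by simp only; omega)
      rw [this]; exact hstep.1
    · have : t = ⟨2 * ((t : ℕ) / 2) + 1, by omega⟩ := Fin.ext (by simp only; omega)
      rw [this]; exact hstep.2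

/-- in any 7-schedule of the 2-RAR instance, one of `VJob(j,t,⊤)` and
`VJob(j,t,⊥)` is assigned to `CMach(κ(j,t))` and the other to `TMach(j,⌊t/2⌋)`. -/
theorem statement11 (S : SAT3Star) (σ : QJob S → QMach S) (h : SevenSchedule S σ)
    (j : Fin S.n) (t : Fin 4) :
    (σ (.inr (.inr (j, t, true))) = .inr (S.occ (j, t)) ∧
      σ (.inr (.inr (j, t, false))) = .inl (j, half t)) ∨
    (σ (.inr (.inr (j, t, false))) = .inr (S.occ (j, t)) ∧
      σ (.inr (.inr (j, t, true))) = .inl (j, half t)) := by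
  exact placed_of_lt h _ j t (Nat.lt_succ_self _)
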